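/- Let n ≥ 2, α ∈ (0,2), let ν be a nonzero finite Borel measure on the unit sphere S ⊆ ℝⁿ, and define h(x) := ∫_S M(x,w) ν(dw) for x in the open unit ball B. Let v be α-harmonic in B and positive on B, and suppose that for ν-almost every z ∈ S and every β > 1 the limit of v(x)/h(x) as x → z with x ∈ A^β_z exists and is nonzero. Then for every function u that is α-harmonic in B and positive on B, for ν-almost every z ∈ S and every β > 1, the limit of u(x)/v(x) as x → z with x ∈ A^β_z exists. -/

import Mathlib

open Metric Set MeasureTheory Filter

/-- The α-stable Poisson kernel of the ball `B(x₀, r)`. -/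
noncomputable def stablePoissonKernel (n : ℕ) (α : ℝ) (x₀ : EuclideanSpace ℝ (Fin n))
    (r : ℝ) (x v : EuclideanSpace ℝ (Fin n)) : ℝ :=
  (Real.Gamma (n / 2) * Real.pi ^ (-(n : ℝ) / 2 - 1) * Real.sin (Real.pi * α / 2)) *
    ((r ^ 2 - dist x x₀ ^ 2) / (dist v x₀ ^ 2 - r ^ 2)) ^ (α / 2) *
    dist x v ^ (-(n : ℝ))

/-- `u : ℝⁿ → [0,∞)` Borel with `∫ u(x)(1+|x|)^{−n−α} dx < ∞` is α-harmonic in the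
open set `D` if, for every ball whose closure lies in `D` and every point `x` of the
ball, `∫_{|v−x₀|>r} P_{x₀,r}(x,v) u(v) dv` is finite and equals `u(x)`. -/
def IsAlphaHarmonic (n : ℕ) (α : ℝ) (D : Set (EuclideanSpace ℝ (Fin n)))
    (u : EuclideanSpace ℝ (Fin n) → ℝ) : Prop :=
  Measurable u ∧ (∀ x, 0 ≤ u x) ∧
    Integrable (fun x => u x * (1 + ‖x‖) ^ (-(n : ℝ) - α)) ∧
    ∀ (x₀ : EuclideanSpace ℝ (Fin n)) (r : ℝ), 0 < r → closedBall x₀ r ⊆ D →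
      ∀ x ∈ ball x₀ r,
        IntegrableOn (fun v => stablePoissonKernel n α x₀ r x v * u v)
          {v | r < dist v x₀} ∧
        ∫ v in {v | r < dist v x₀}, stablePoissonKernel n α x₀ r x v * u v = u x

/-- Martin kernel of the unit ball for the symmetric α-stable process, normalized at
the origin: `M(x,w) = (1−|x|²)^{α/2} |x−w|^{−n}`. -/
noncomputable def martinKernel (n : ℕ) (α : ℝ) (x w : EuclideanSpace ℝ (Fin n)) : ℝ :=
  (1 - ‖x‖ ^ 2) ^ (α / 2) * dist x w ^ (-(n : ℝ))

/-- Stolz open set of the unit ball at a boundary point `z`, with angle `β > 1`: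
`A^β_z = { y ∈ B : 1−|y| < 1/3 ∧ |y−z| < β(1−|y|) }`. -/
def stolzSet (n : ℕ) (β : ℝ) (z : EuclideanSpace ℝ (Fin n)) :
    Set (EuclideanSpace ℝ (Fin n)) :=
  {y | y ∈ ball (0 : EuclideanSpace ℝ (Fin n)) 1 ∧ 1 - ‖y‖ < 1 / 3 ∧
    dist y z < β * (1 - ‖y‖)}

/-!
The Poisson formula on `B(0, r)` expresses `u` on that ball as `(r² - |x|²)^{α/2}` times the
potential `∫ |x - v|^{-n} l_r(dv)` of a measure `l_r` carried by `|v| > r`. The part of `l_r` in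
the closed unit ball has bounded mass and the remaining part increases with `r`, so as `r ↑ 1` weak
compactness yields `u(x) = (1 - |x|²)^{α/2} ∫ |x - v|^{-n} l(dv)` with `l` carried by `|v| ≥ 1`.
Hence `u / h` is the quotient of the potentials of `l` and `ν`.

It converges nontangentially to `f = dl/dν` at `ν`-almost every `z`. Indeed, in a Stolz set
`|x - v|` is comparable to `max |x - z| |z - v|`, so up to constants a potential only sees the
masses of the balls centred at `z`. On small balls the mass of `|l - f(z) ν|` is negligible
compared with that of `ν`, by Lebesgue differentiation, and the contribution of large balls is
bounded, whereas the potential of `ν` blows up at `z` because `ν` is singular to Lebesgue measure.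
Finally `u / v = (u / h) / (v / h)`.
-/

open scoped ENNReal NNReal Topology

section QuotientLimits

variable {ι : Type*} {F : Filter ι} {a b s : ι → ℝ≥0∞}

theorem tendsto_div_nhds_zero_of_forall_le_mul_add (hb : Tendsto b F (𝓝 ∞))
    (h : ∀ ε : ℝ≥0∞, ε ≠ 0 → ε ≠ ∞ → ∃ T : ℝ≥0∞, T ≠ ∞ ∧ ∀ᶠ i in F, a i ≤ ε * b i + T) :
    Tendsto (fun i => a i / b i) F (𝓝 0) := by
  rw [ENNReal.tendsto_nhds_zero]
  intro η hη
  rcases eq_or_ne η ∞ with rfl | hη_top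
  · exact Eventually.of_forall fun _ => le_top
  have hη2 : η / 2 ≠ 0 := ENNReal.half_pos hη.ne' |>.ne'
  obtain ⟨T, hT, hle⟩ := h (η / 2) hη2 (ENNReal.div_ne_top hη_top two_ne_zero)
  have hT_div : Tendsto (fun i => T / b i) F (𝓝 0) := by
    simpa only [ENNReal.div_top] using ENNReal.Tendsto.const_div hb (Or.inr hT)
  filter_upwards [hle, ENNReal.tendsto_nhds_zero.1 hT_div _ (pos_iff_ne_zero.2 hη2)]
    with i hi hTi
  calc a i / b i ≤ (η / 2 * b i + T) / b i := by gcongr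
    _ = η / 2 * b i / b i + T / b i := ENNReal.add_div
    _ ≤ η / 2 + η / 2 := add_le_add (ENNReal.div_le_of_le_mul le_rfl) hTi
    _ = η := ENNReal.add_halves η

theorem tendsto_div_of_le_mul_add_of_mul_le_add {c : ℝ≥0∞} (hc : c ≠ ∞)
    (hb0 : ∀ᶠ i in F, b i ≠ 0) (hb_top : ∀ᶠ i in F, b i ≠ ∞)
    (h_le : ∀ i, a i ≤ c * b i + s i) (h_ge : ∀ i, c * b i ≤ a i + s i)
    (hs : Tendsto (fun i => s i / b i) F (𝓝 0)) :
    Tendsto (fun i => a i / b i) F (𝓝 c) := by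
  have hlower : Tendsto (fun i => c - s i / b i) F (𝓝 c) := by
    simpa only [tsub_zero] using ENNReal.Tendsto.sub tendsto_const_nhds hs (Or.inl hc)
  have hupper : Tendsto (fun i => c + s i / b i) F (𝓝 c) := by
    simpa only [add_zero] using tendsto_const_nhds.add hs
  refine tendsto_of_tendsto_of_tendsto_of_le_of_le' hlower hupper ?_ ?_
  · filter_upwards [hb0, hb_top] with i hi0 hi_top
    rw [tsub_le_iff_right, ← ENNReal.add_div,
      ENNReal.le_div_iff_mul_le (Or.inl hi0) (Or.inl hi_top)]
    exact h_ge i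
  · filter_upwards [hb0, hb_top] with i hi0 hi_top
    calc a i / b i ≤ (c * b i + s i) / b i := by gcongr; exact h_le i
      _ = c + s i / b i := by rw [ENNReal.add_div, ENNReal.mul_div_cancel_right hi0 hi_top]

end QuotientLimits

section IntegralComparison

variable {X : Type*} [MeasurableSpace X] {μ σ ν : Measure X}

theorem inv_pow_le_ofReal_pow_mul_inv_pow {K : ℝ} (hK : 0 < K) {a b : ℝ≥0∞}
    (h : b ≤ ENNReal.ofReal K * a) (d : ℕ) :
    (a ^ d)⁻¹ ≤ ENNReal.ofReal K ^ d * (b ^ d)⁻¹ := by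
  have hK0 : ENNReal.ofReal K ^ d ≠ 0 := pow_ne_zero d (ENNReal.ofReal_pos.2 hK).ne'
  have hK_top : ENNReal.ofReal K ^ d ≠ ∞ := ENNReal.pow_ne_top ENNReal.ofReal_ne_top
  calc (a ^ d)⁻¹ = ENNReal.ofReal K ^ d * ((ENNReal.ofReal K * a) ^ d)⁻¹ := by
        rw [mul_pow, ENNReal.mul_inv (Or.inl hK0) (Or.inl hK_top), ← mul_assoc,
          ENNReal.mul_inv_cancel hK0 hK_top, one_mul]
    _ ≤ ENNReal.ofReal K ^ d * (b ^ d)⁻¹ := by gcongr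

theorem lintegral_inv_pow_le_ofReal_pow_mul {K : ℝ} (hK : 0 < K) {f g : X → ℝ≥0∞}
    (h : ∀ᵐ y ∂μ, g y ≤ ENNReal.ofReal K * f y) (d : ℕ) :
    ∫⁻ y, (f y ^ d)⁻¹ ∂μ ≤ ENNReal.ofReal K ^ d * ∫⁻ y, (g y ^ d)⁻¹ ∂μ := by
  rw [← lintegral_const_mul' _ _ (ENNReal.pow_ne_top ENNReal.ofReal_ne_top)]
  exact lintegral_mono_ae (h.mono fun y hy => inv_pow_le_ofReal_pow_mul_inv_pow hK hy d)

theorem lintegral_le_mul_of_forall_measure_superlevel_le {f : X → ℝ≥0∞} (hf : Measurable f)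
    (hf_top : ∀ x, f x ≠ ∞) {ε : ℝ≥0∞} (hε : ε ≠ ∞)
    (h : ∀ t : ℝ, 0 < t →
      σ {x | ENNReal.ofReal t ≤ f x} ≤ ε * ν {x | ENNReal.ofReal t ≤ f x}) :
    ∫⁻ x, f x ∂σ ≤ ε * ∫⁻ x, f x ∂ν := by
  have layer_cake (ρ : Measure X) :
      ∫⁻ x, f x ∂ρ = ∫⁻ t in Ioi (0 : ℝ), ρ {x | ENNReal.ofReal t ≤ f x} := by
    simp only [ENNReal.ofReal_le_iff_le_toReal (hf_top _)]
    rw [← lintegral_eq_lintegral_meas_le ρ (Eventually.of_forall fun _ => ENNReal.toReal_nonneg)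
      hf.ennreal_toReal.aemeasurable]
    simp only [ENNReal.ofReal_toReal (hf_top _)]
  rw [layer_cake, layer_cake, ← lintegral_const_mul' _ _ hε]
  exact setLIntegral_mono' measurableSet_Ioi h

end IntegralComparison

section Potentials

variable {X : Type*} [PseudoMetricSpace X] [MeasurableSpace X] {d : ℕ} {μ σ ν : Measure X}
  {x z : X}

/-- The potential `x ↦ ∫ |x - y|^{-d} μ(dy)` of a measure. It takes values in `[0, ∞]`, and the
kernel is infinite on the diagonal when `d ≠ 0`. -/
noncomputable def invDistPotential (d : ℕ) (μ : Measure X) (x : X) : ℝ≥0∞ :=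
  ∫⁻ y, (edist x y ^ d)⁻¹ ∂μ

/-- The potential of `μ` at `z` with the kernel cut off at distance `δ`. Along a nontangential
approach `x → z` it is comparable to `invDistPotential d μ x` for `δ = |x - z|`, and being radial
about `z` it only depends on the masses of the balls centred at `z`. -/
noncomputable def truncatedPotential (d : ℕ) (μ : Measure X) (δ : ℝ≥0∞) (z : X) : ℝ≥0∞ :=
  ∫⁻ y, (max δ (edist z y) ^ d)⁻¹ ∂μ

theorem invDistPotential_mono (h : μ ≤ ν) (x : X) :
    invDistPotential d μ x ≤ invDistPotential d ν x :=
  lintegral_mono' h le_rfl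

theorem invDistPotential_add (μ ν : Measure X) (x : X) :
    invDistPotential d (μ + ν) x = invDistPotential d μ x + invDistPotential d ν x :=
  lintegral_add_measure _ _ _

theorem invDistPotential_smul (c : ℝ≥0∞) (μ : Measure X) (x : X) :
    invDistPotential d (c • μ) x = c * invDistPotential d μ x :=
  lintegral_smul_measure c _

theorem truncatedPotential_le_invDistPotential (δ : ℝ≥0∞) (z : X) :
    truncatedPotential d μ δ z ≤ invDistPotential d μ z :=
  lintegral_mono fun y => by gcongr; exact le_max_right _ _

theorem truncatedPotential_eq_invDistPotential {δ : ℝ≥0∞} (h : ∀ᵐ y ∂μ, δ ≤ edist z y) :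
    truncatedPotential d μ δ z = invDistPotential d μ z :=
  lintegral_congr_ae (h.mono fun y hy => by simp only [max_eq_right hy])

theorem truncatedPotential_edist_le (x z : X) :
    truncatedPotential d μ (edist x z) z ≤ 2 ^ d * invDistPotential d μ x := by
  rw [← ENNReal.ofReal_ofNat 2]
  refine lintegral_inv_pow_le_ofReal_pow_mul two_pos (Eventually.of_forall fun y => ?_) d
  calc edist x y ≤ edist x z + edist z y := edist_triangle x z y
    _ ≤ ENNReal.ofReal 2 * max (edist x z) (edist z y) := by
        rw [ENNReal.ofReal_ofNat, two_mul]
        exact add_le_add (le_max_left _ _) (le_max_right _ _)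

variable [OpensMeasurableSpace X]

theorem measure_closedBall_div_le_truncatedPotential (μ : Measure X) (z : X) (r : ℝ) :
    μ (closedBall z r) / ENNReal.ofReal r ^ d ≤ truncatedPotential d μ (ENNReal.ofReal r) z := by
  calc μ (closedBall z r) / ENNReal.ofReal r ^ d
      = ∫⁻ _ in closedBall z r, (ENNReal.ofReal r ^ d)⁻¹ ∂μ := by
        rw [setLIntegral_const, mul_comm, div_eq_mul_inv]
    _ ≤ ∫⁻ y in closedBall z r, (max (ENNReal.ofReal r) (edist z y) ^ d)⁻¹ ∂μ := by
        refine setLIntegral_mono' measurableSet_closedBall fun y hy => ?_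
        rw [mem_closedBall'] at hy
        rw [max_eq_left (by rw [edist_dist]; exact ENNReal.ofReal_le_ofReal hy)]
    _ ≤ truncatedPotential d μ (ENNReal.ofReal r) z := setLIntegral_le_lintegral _ _

theorem measure_closedBall_le_mul_invDistPotential (μ : Measure X) (x : X) {r : ℝ} (hr : 0 < r) :
    μ (closedBall x r) ≤ invDistPotential d μ x * ENNReal.ofReal r ^ d := by
  rw [← ENNReal.div_le_iff (pow_ne_zero d (ENNReal.ofReal_pos.2 hr).ne')
    (ENNReal.pow_ne_top ENNReal.ofReal_ne_top)]
  exact (measure_closedBall_div_le_truncatedPotential μ x r).trans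
    (truncatedPotential_le_invDistPotential _ x)

theorem isLocallyFiniteMeasure_of_invDistPotential_ne_top (h : invDistPotential d μ x ≠ ∞) :
    IsLocallyFiniteMeasure μ := by
  refine ⟨fun y => ⟨closedBall x (dist y x + 1), ?_, ?_⟩⟩
  · exact closedBall_mem_nhds_of_mem (by simp)
  · exact (measure_closedBall_le_mul_invDistPotential μ x (by positivity)).trans_lt
      (ENNReal.mul_lt_top h.lt_top (ENNReal.pow_lt_top ENNReal.ofReal_lt_top))

theorem truncatedPotential_restrict_closedBall_le (hd : d ≠ 0) {δ ε : ℝ≥0∞} (hδ : δ ≠ 0)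
    (hε : ε ≠ ∞) {R : ℝ} (hR : 0 < R)
    (h : ∀ r ∈ Ioc 0 R, σ (closedBall z r) ≤ ε * ν (closedBall z r)) :
    truncatedPotential d (σ.restrict (closedBall z R)) δ z ≤ ε * truncatedPotential d ν δ z := by
  refine lintegral_le_mul_of_forall_measure_superlevel_le (by fun_prop)
    (fun y => ENNReal.inv_ne_top.2 (pow_ne_zero d (hδ.bot_lt.trans_le (le_max_left _ _)).ne'))
    hε fun t ht => ?_
  obtain ⟨s, hs, hst⟩ : ∃ s : ℝ, 0 < s ∧ t = (s ^ d)⁻¹ :=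
    ⟨t⁻¹ ^ (d : ℝ)⁻¹, by positivity,
      by rw [Real.rpow_inv_natCast_pow (by positivity) hd, inv_inv]⟩
  have superlevel (y : X) : ENNReal.ofReal t ≤ (max δ (edist z y) ^ d)⁻¹ ↔
      δ ≤ ENNReal.ofReal s ∧ y ∈ closedBall z s := by
    rw [hst, ENNReal.ofReal_inv_of_pos (by positivity), ENNReal.ofReal_pow hs.le,
      ENNReal.inv_le_inv, ENNReal.pow_le_pow_left_iff hd, max_le_iff, mem_closedBall',
      edist_le_ofReal hs.le]
  simp only [superlevel]
  by_cases hδs : δ ≤ ENNReal.ofReal s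
  swap
  · simp [hδs]
  simp only [hδs, true_and, ofPred_mem_eq]
  rw [Measure.restrict_apply measurableSet_closedBall]
  rcases le_total s R with hsR | hRs
  · exact (measure_mono inter_subset_left).trans (h s ⟨hs, hsR⟩)
  · calc σ (closedBall z s ∩ closedBall z R) ≤ σ (closedBall z R) :=
          measure_mono inter_subset_right
      _ ≤ ε * ν (closedBall z R) := h R ⟨hR, le_rfl⟩
      _ ≤ ε * ν (closedBall z s) := by gcongr

theorem tendsto_invDistPotential_nhds_top
    (h : Tendsto (fun r => ENNReal.ofReal r ^ d / ν (closedBall z r)) (𝓝[>] 0) (𝓝 0)) :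
    Tendsto (invDistPotential d ν) (𝓝[{x | 0 < dist x z}] z) (𝓝 ∞) := by
  have hdist : Tendsto (dist · z) (𝓝[{x | 0 < dist x z}] z) (𝓝[>] 0) := by
    refine tendsto_nhdsWithin_iff.2 ⟨?_, self_mem_nhdsWithin⟩
    exact tendsto_iff_dist_tendsto_zero.1 (tendsto_id.mono_left nhdsWithin_le_nhds)
  have hinv := tendsto_inv_iff.2 (h.comp hdist)
  rw [ENNReal.inv_zero] at hinv
  have hscaled :=
    ENNReal.Tendsto.const_mul (a := ((2 : ℝ≥0∞) ^ d)⁻¹) hinv (Or.inl ENNReal.top_ne_zero)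
  rw [ENNReal.mul_top (by simp)] at hscaled
  refine tendsto_nhds_top_mono hscaled ?_
  filter_upwards [self_mem_nhdsWithin] with x (hx : 0 < dist x z)
  have hpow : ENNReal.ofReal (dist x z) ^ d ≠ 0 := pow_ne_zero d (ENNReal.ofReal_pos.2 hx).ne'
  have hpow_top : ENNReal.ofReal (dist x z) ^ d ≠ ∞ := ENNReal.pow_ne_top ENNReal.ofReal_ne_top
  rw [ENNReal.inv_mul_le_iff (by simp) (by simp), Function.comp_apply,
    ENNReal.inv_div (Or.inr hpow_top) (Or.inr hpow)]
  refine (measure_closedBall_div_le_truncatedPotential ν z _).trans ?_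
  rw [← edist_dist]
  exact truncatedPotential_edist_le x z

end Potentials

section NontangentialApproach

variable {E : Type*} [NormedAddCommGroup E] {β : ℝ} {x z v : E}

/-- The nontangential approach region in the unit ball with vertex `z` and aperture `β`, that is,
the Stolz set without its restriction to a neighbourhood of the unit sphere. -/
def stolzCone (β : ℝ) (z : E) : Set E :=
  {x | ‖x‖ < 1 ∧ dist x z < β * (1 - ‖x‖)}

theorem one_sub_norm_le_dist (hv : 1 ≤ ‖v‖) (x : E) : 1 - ‖x‖ ≤ dist x v := by
  rw [dist_eq_norm']
  exact (sub_le_sub_right hv _).trans (norm_sub_norm_le v x)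

theorem dist_pos_of_norm_lt_one (hx : ‖x‖ < 1) (hv : 1 ≤ ‖v‖) : 0 < dist x v :=
  (sub_pos.2 hx).trans_le (one_sub_norm_le_dist hv x)

theorem max_edist_le_of_mem_stolzCone (hβ : 0 < β) (hx : x ∈ stolzCone β z) (hv : 1 ≤ ‖v‖) :
    max (edist x z) (edist z v) ≤ ENNReal.ofReal (1 + β) * edist x v := by
  have hxz : dist x z ≤ β * dist x v :=
    hx.2.le.trans (mul_le_mul_of_nonneg_left (one_sub_norm_le_dist hv x) hβ.le)
  have htri : dist z v ≤ dist x z + dist x v := dist_triangle_left z v x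
  have hxv : 0 ≤ dist x v := dist_nonneg
  simp only [edist_dist]
  rw [← ENNReal.ofReal_mul (by positivity), ← ENNReal.ofReal_max]
  exact ENNReal.ofReal_le_ofReal (max_le (by linarith) (by linarith))

theorem nhdsWithin_stolzCone_le (hz : ‖z‖ = 1) (β : ℝ) :
    𝓝[stolzCone β z] z ≤ 𝓝[{x | 0 < dist x z}] z :=
  nhdsWithin_mono z fun _ hx => dist_pos_of_norm_lt_one hx.1 hz.ge

variable [MeasurableSpace E] {d : ℕ} {μ σ ν : Measure E}

theorem invDistPotential_le_truncatedPotential (hβ : 0 < β) (hx : x ∈ stolzCone β z)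
    (hμ : ∀ᵐ v ∂μ, 1 ≤ ‖v‖) :
    invDistPotential d μ x
      ≤ ENNReal.ofReal (1 + β) ^ d * truncatedPotential d μ (edist x z) z :=
  lintegral_inv_pow_le_ofReal_pow_mul (by positivity)
    (hμ.mono fun _ hv => max_edist_le_of_mem_stolzCone hβ hx hv) d

theorem invDistPotential_ne_top_of_norm_lt_one [IsFiniteMeasure μ] (hμ : ∀ᵐ v ∂μ, 1 ≤ ‖v‖)
    (hx : ‖x‖ < 1) : invDistPotential d μ x ≠ ∞ := by
  have hpos : 0 < 1 - ‖x‖ := sub_pos.2 hx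
  have hbound : invDistPotential d μ x ≤ ∫⁻ _, (ENNReal.ofReal (1 - ‖x‖) ^ d)⁻¹ ∂μ := by
    refine lintegral_mono_ae (hμ.mono fun v hv => ?_)
    rw [edist_dist]
    gcongr
    exact one_sub_norm_le_dist hv x
  rw [lintegral_const] at hbound
  refine ne_top_of_le_ne_top (ENNReal.mul_ne_top ?_ (measure_ne_top μ univ)) hbound
  exact ENNReal.inv_ne_top.2 (pow_ne_zero d (ENNReal.ofReal_pos.2 hpos).ne')

variable [OpensMeasurableSpace E]

theorem truncatedPotential_restrict_compl_closedBall_le (hz : ‖z‖ = 1) {R : ℝ} (hR : 0 < R)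
    (δ : ℝ≥0∞) :
    truncatedPotential d (μ.restrict (closedBall z R)ᶜ) δ z
      ≤ ENNReal.ofReal (1 + R⁻¹) ^ d * invDistPotential d μ 0 := by
  refine (lintegral_inv_pow_le_ofReal_pow_mul (K := 1 + R⁻¹) (by positivity) ?_ d).trans
    (mul_le_mul_right (invDistPotential_mono Measure.restrict_le_self 0) _)
  refine (ae_restrict_iff' measurableSet_closedBall.compl).2 (Eventually.of_forall fun v hv => ?_)
  have hRv : R < dist z v := by simpa only [mem_compl_iff, mem_closedBall', not_le] using hv
  have htri : dist 0 v ≤ 1 + dist z v := by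
    simpa only [dist_zero_left, hz] using dist_triangle 0 z v
  have hone : 1 ≤ R⁻¹ * dist z v := by rw [inv_mul_eq_div, one_le_div hR]; exact hRv.le
  calc edist 0 v ≤ ENNReal.ofReal (1 + R⁻¹) * edist z v := by
        rw [edist_dist, edist_dist, ← ENNReal.ofReal_mul (by positivity)]
        exact ENNReal.ofReal_le_ofReal (by linarith)
    _ ≤ ENNReal.ofReal (1 + R⁻¹) * max δ (edist z v) := by gcongr; exact le_max_right _ _

theorem invDistPotential_le_mul_invDistPotential_add (hd : d ≠ 0) (hz : ‖z‖ = 1) (hβ : 0 < β)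
    (hx : x ∈ stolzCone β z) (hσ : ∀ᵐ v ∂σ, 1 ≤ ‖v‖) {ε : ℝ≥0∞} (hε : ε ≠ ∞) {R : ℝ}
    (hR : 0 < R) (h : ∀ r ∈ Ioc 0 R, σ (closedBall z r) ≤ ε * ν (closedBall z r)) :
    invDistPotential d σ x ≤ ENNReal.ofReal (1 + β) ^ d *
      (ε * (2 ^ d * invDistPotential d ν x)
        + ENNReal.ofReal (1 + R⁻¹) ^ d * invDistPotential d σ 0) := by
  have hδ : edist x z ≠ 0 := by
    rw [edist_dist]
    exact (ENNReal.ofReal_pos.2 (dist_pos_of_norm_lt_one hx.1 hz.ge)).ne'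
  have hsplit : truncatedPotential d σ (edist x z) z
      = truncatedPotential d (σ.restrict (closedBall z R)) (edist x z) z
        + truncatedPotential d (σ.restrict (closedBall z R)ᶜ) (edist x z) z :=
    (lintegral_add_compl _ measurableSet_closedBall).symm
  refine (invDistPotential_le_truncatedPotential hβ hx hσ).trans ?_
  rw [hsplit]
  gcongr
  · exact (truncatedPotential_restrict_closedBall_le hd hδ hε hR h).trans
      (by gcongr; exact truncatedPotential_edist_le x z)
  · exact truncatedPotential_restrict_compl_closedBall_le hz hR _

theorem tendsto_invDistPotential_div_nhds_zero (hd : d ≠ 0) (hz : ‖z‖ = 1) (hβ : 0 < β)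
    (hσ : ∀ᵐ v ∂σ, 1 ≤ ‖v‖) (hσ0 : invDistPotential d σ 0 ≠ ∞)
    (hratio : Tendsto (fun r => σ (closedBall z r) / ν (closedBall z r)) (𝓝[>] 0) (𝓝 0))
    (hν : Tendsto (invDistPotential d ν) (𝓝[stolzCone β z] z) (𝓝 ∞)) :
    Tendsto (fun x => invDistPotential d σ x / invDistPotential d ν x)
      (𝓝[stolzCone β z] z) (𝓝 0) := by
  refine tendsto_div_nhds_zero_of_forall_le_mul_add hν fun ε hε0 hε_top => ?_
  set c : ℝ≥0∞ := ENNReal.ofReal (1 + β) ^ d * 2 ^ d with hc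
  have hc0 : c ≠ 0 := by positivity
  have hc_top : c ≠ ∞ := by finiteness
  have hη_top : ε / c ≠ ∞ := ENNReal.div_ne_top hε_top hc0
  obtain ⟨R, hR, hRσ⟩ := mem_nhdsGT_iff_exists_Ioc_subset.1
    (ENNReal.tendsto_nhds_zero.1 hratio (ε / c) (ENNReal.div_pos hε0 hc_top))
  have hball : ∀ r ∈ Ioc 0 R, σ (closedBall z r) ≤ ε / c * ν (closedBall z r) := fun r hr =>
    (ENNReal.div_le_iff_le_mul (Or.inr hη_top)
      (Or.inr (ENNReal.div_pos hε0 hc_top).ne')).1 (hRσ hr)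
  refine ⟨ENNReal.ofReal (1 + β) ^ d * (ENNReal.ofReal (1 + R⁻¹) ^ d * invDistPotential d σ 0),
    by finiteness, ?_⟩
  filter_upwards [self_mem_nhdsWithin] with x hx
  refine (invDistPotential_le_mul_invDistPotential_add hd hz hβ hx hσ hη_top hR hball).trans_eq ?_
  rw [mul_add]
  congr 1
  calc ENNReal.ofReal (1 + β) ^ d * (ε / c * (2 ^ d * invDistPotential d ν x))
      = ε / c * c * invDistPotential d ν x := by rw [hc]; ring
    _ = ε * invDistPotential d ν x := by rw [ENNReal.div_mul_cancel hc0 hc_top]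

end NontangentialApproach

section LebesguePoints

variable {X : Type*} [MeasurableSpace X] {l ν : Measure X}

/-- The total variation `|l - f(z) ν|`, where `f = dl/dν`, written through the Lebesgue
decomposition of `l` so that no signed measures are needed. -/
noncomputable def densityDefect (l ν : Measure X) (z : X) : Measure X :=
  l.singularPart ν
    + ν.withDensity fun y => ‖(l.rnDeriv ν y).toReal - (l.rnDeriv ν z).toReal‖ₑ

theorem withDensity_le_add_of_le {f g h : X → ℝ≥0∞} (hg : Measurable g) (hle : f ≤ g + h) :
    ν.withDensity f ≤ ν.withDensity g + ν.withDensity h := by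
  rw [← withDensity_add_left hg]
  exact withDensity_mono (Eventually.of_forall hle)

theorem singularPart_add_withDensity_enorm [SigmaFinite l] [SigmaFinite ν] :
    l.singularPart ν + ν.withDensity (fun y => ‖(l.rnDeriv ν y).toReal‖ₑ) = l := by
  have hdensity : (fun y => ‖(l.rnDeriv ν y).toReal‖ₑ) =ᵐ[ν] l.rnDeriv ν :=
    (l.rnDeriv_ne_top ν).mono fun y hy => Real.enorm_toReal hy
  rw [withDensity_congr_ae hdensity]
  exact (l.haveLebesgueDecomposition_add ν).symm

variable [SigmaFinite l] [SigmaFinite ν]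

theorem le_smul_add_densityDefect (z : X) :
    l ≤ ‖(l.rnDeriv ν z).toReal‖ₑ • ν + densityDefect l ν z := by
  calc l = l.singularPart ν + ν.withDensity (fun y => ‖(l.rnDeriv ν y).toReal‖ₑ) :=
        singularPart_add_withDensity_enorm.symm
    _ ≤ l.singularPart ν + (‖(l.rnDeriv ν z).toReal‖ₑ • ν
          + ν.withDensity fun y => ‖(l.rnDeriv ν y).toReal - (l.rnDeriv ν z).toReal‖ₑ) := by
        rw [← withDensity_const]
        gcongr
        refine withDensity_le_add_of_le measurable_const fun y => ?_
        simpa using enorm_add_le (l.rnDeriv ν z).toReal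
          ((l.rnDeriv ν y).toReal - (l.rnDeriv ν z).toReal)
    _ = ‖(l.rnDeriv ν z).toReal‖ₑ • ν + densityDefect l ν z := add_left_comm _ _ _

theorem smul_le_add_densityDefect (z : X) :
    ‖(l.rnDeriv ν z).toReal‖ₑ • ν ≤ l + densityDefect l ν z := by
  calc ‖(l.rnDeriv ν z).toReal‖ₑ • ν
      ≤ ν.withDensity (fun y => ‖(l.rnDeriv ν y).toReal‖ₑ)
        + ν.withDensity fun y => ‖(l.rnDeriv ν y).toReal - (l.rnDeriv ν z).toReal‖ₑ := by
        rw [← withDensity_const]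
        refine withDensity_le_add_of_le (by fun_prop) fun y => ?_
        simpa using enorm_sub_le (a := (l.rnDeriv ν y).toReal)
          (b := (l.rnDeriv ν y).toReal - (l.rnDeriv ν z).toReal)
    _ ≤ (l.singularPart ν + ν.withDensity (fun y => ‖(l.rnDeriv ν y).toReal‖ₑ))
        + densityDefect l ν z :=
        add_le_add (Measure.le_add_left le_rfl) (Measure.le_add_left le_rfl)
    _ = l + densityDefect l ν z := by rw [singularPart_add_withDensity_enorm]

theorem densityDefect_le_add_smul (z : X) :
    densityDefect l ν z ≤ l + ‖(l.rnDeriv ν z).toReal‖ₑ • ν := by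
  calc densityDefect l ν z
      ≤ l.singularPart ν + (ν.withDensity (fun y => ‖(l.rnDeriv ν y).toReal‖ₑ)
        + ‖(l.rnDeriv ν z).toReal‖ₑ • ν) := by
        rw [← withDensity_const]
        exact add_le_add_right
          (withDensity_le_add_of_le (by fun_prop) fun y => enorm_sub_le) _
    _ = l + ‖(l.rnDeriv ν z).toReal‖ₑ • ν := by
        rw [← add_assoc, singularPart_add_withDensity_enorm]

end LebesguePoints

section Differentiation

theorem locallyIntegrable_toReal_rnDeriv {X : Type*} [TopologicalSpace X] [MeasurableSpace X]
    (l ν : Measure X) [IsLocallyFiniteMeasure l] :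
    LocallyIntegrable (fun y => (l.rnDeriv ν y).toReal) ν := by
  intro x
  obtain ⟨U, hU, hU_lt⟩ := l.finiteAt_nhds x
  exact ⟨U, hU, integrable_toReal_of_lintegral_ne_top (l.measurable_rnDeriv ν).aemeasurable
    ((Measure.setLIntegral_rnDeriv_le U).trans_lt hU_lt).ne⟩

variable {X : Type*} [MetricSpace X] [SecondCountableTopology X] [MeasurableSpace X] [BorelSpace X]
  [HasBesicovitchCovering X]

theorem ae_tendsto_closedBall_div_of_mutuallySingular (l ν : Measure X) [IsLocallyFiniteMeasure l]
    [IsLocallyFiniteMeasure ν] (h : l ⟂ₘ ν) :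
    ∀ᵐ z ∂ν, Tendsto (fun r => l (closedBall z r) / ν (closedBall z r)) (𝓝[>] 0) (𝓝 0) := by
  filter_upwards [(Besicovitch.vitaliFamily ν).ae_eventually_measure_zero_of_singular h] with z hz
  exact hz.comp (Besicovitch.tendsto_filterAt ν z)

theorem ae_tendsto_densityDefect_closedBall_div (l ν : Measure X) [IsLocallyFiniteMeasure l]
    [IsLocallyFiniteMeasure ν] :
    ∀ᵐ z ∂ν, Tendsto (fun r => densityDefect l ν z (closedBall z r) / ν (closedBall z r))
      (𝓝[>] 0) (𝓝 0) := by
  filter_upwards [(Besicovitch.vitaliFamily ν).ae_tendsto_lintegral_enorm_sub_div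
      (locallyIntegrable_toReal_rnDeriv l ν),
    ae_tendsto_closedBall_div_of_mutuallySingular _ ν (l.mutuallySingular_singularPart ν)]
    with z hdensity hsingular
  have hsum := hsingular.add (hdensity.comp (Besicovitch.tendsto_filterAt ν z))
  rw [add_zero] at hsum
  refine hsum.congr fun r => ?_
  rw [Function.comp_apply, densityDefect, Measure.add_apply, ENNReal.add_div,
    withDensity_apply _ measurableSet_closedBall]

end Differentiation

section Fatou

open Module

variable {E : Type*} [NormedAddCommGroup E] [NormedSpace ℝ E] [FiniteDimensional ℝ E]
  [MeasurableSpace E] [BorelSpace E] {l ν : Measure E}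

theorem ae_tendsto_ofReal_pow_finrank_div (μ : Measure E) [μ.IsAddHaarMeasure]
    [IsLocallyFiniteMeasure ν] (h : μ ⟂ₘ ν) :
    ∀ᵐ z ∂ν, Tendsto (fun r => ENNReal.ofReal r ^ finrank ℝ E / ν (closedBall z r))
      (𝓝[>] 0) (𝓝 0) := by
  filter_upwards [ae_tendsto_closedBall_div_of_mutuallySingular μ ν h] with z hz
  have hball0 : μ (ball (0 : E) 1) ≠ 0 := (measure_ball_pos μ 0 one_pos).ne'
  have hball_top : μ (ball (0 : E) 1) ≠ ∞ := measure_ball_lt_top.ne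
  have hscaled := ENNReal.Tendsto.const_mul hz (Or.inr (ENNReal.inv_ne_top.2 hball0))
  rw [mul_zero] at hscaled
  refine hscaled.congr' ?_
  filter_upwards [self_mem_nhdsWithin] with r (hr : 0 < r)
  rw [μ.addHaar_closedBall z hr.le, ENNReal.ofReal_pow hr.le, mul_comm (_ ^ _), mul_div_assoc,
    ← mul_assoc, ENNReal.inv_mul_cancel hball0 hball_top, one_mul]

theorem mutuallySingular_of_ae_norm_eq_one (μ : Measure E) [μ.IsAddHaarMeasure]
    (hν : ∀ᵐ z ∂ν, ‖z‖ = 1) : μ ⟂ₘ ν := by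
  refine ⟨sphere 0 1, isClosed_sphere.measurableSet,
    μ.addHaar_sphere_of_ne_zero 0 one_ne_zero, ?_⟩
  rw [measure_eq_zero_iff_ae_notMem]
  filter_upwards [hν] with z hz
  simpa using hz

theorem ae_tendsto_invDistPotential_nhds_top [IsLocallyFiniteMeasure ν]
    (hν : ∀ᵐ z ∂ν, ‖z‖ = 1) :
    ∀ᵐ z ∂ν, ∀ β, Tendsto (invDistPotential (finrank ℝ E) ν) (𝓝[stolzCone β z] z) (𝓝 ∞) := by
  filter_upwards [hν, ae_tendsto_ofReal_pow_finrank_div Measure.addHaar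
    (mutuallySingular_of_ae_norm_eq_one Measure.addHaar hν)] with z hz hpow β
  exact (tendsto_invDistPotential_nhds_top hpow).mono_left (nhdsWithin_stolzCone_le hz β)

theorem ae_tendsto_invDistPotential_densityDefect_div [IsFiniteMeasure ν]
    (hν : ∀ᵐ z ∂ν, ‖z‖ = 1) (hl : ∀ᵐ v ∂l, 1 ≤ ‖v‖)
    (hl0 : invDistPotential (finrank ℝ E) l 0 ≠ ∞) :
    ∀ᵐ z ∂ν, ∀ β > 0, Tendsto (fun x => invDistPotential (finrank ℝ E) (densityDefect l ν z) x
      / invDistPotential (finrank ℝ E) ν x) (𝓝[stolzCone β z] z) (𝓝 0) := by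
  have := isLocallyFiniteMeasure_of_invDistPotential_ne_top hl0
  have hν1 : ∀ᵐ v ∂ν, 1 ≤ ‖v‖ := hν.mono fun v hv => hv.ge
  filter_upwards [hν, ae_tendsto_invDistPotential_nhds_top hν,
    ae_tendsto_densityDefect_closedBall_div l ν] with z hz hν_top hdefect β hβ
  have : Nontrivial E := ⟨z, 0, fun hz0 => by simp [hz0] at hz⟩
  have hle := densityDefect_le_add_smul (l := l) (ν := ν) z
  refine tendsto_invDistPotential_div_nhds_zero finrank_pos.ne' hz hβ ?_ ?_ hdefect (hν_top β)
  · exact ae_mono hle (ae_add_measure_iff.2 ⟨hl, Measure.ae_smul_measure hν1 _⟩)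
  · refine ne_top_of_le_ne_top ?_ (invDistPotential_mono hle 0)
    rw [invDistPotential_add, invDistPotential_smul]
    exact ENNReal.add_ne_top.2 ⟨hl0, ENNReal.mul_ne_top enorm_ne_top
      (invDistPotential_ne_top_of_norm_lt_one hν1 (by simp))⟩

theorem ae_tendsto_invDistPotential_div_rnDeriv [IsFiniteMeasure ν]
    (hν : ∀ᵐ z ∂ν, ‖z‖ = 1) (hl : ∀ᵐ v ∂l, 1 ≤ ‖v‖)
    (hl0 : invDistPotential (finrank ℝ E) l 0 ≠ ∞) :
    ∀ᵐ z ∂ν, ∀ β > 0, Tendsto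
      (fun x => invDistPotential (finrank ℝ E) l x / invDistPotential (finrank ℝ E) ν x)
      (𝓝[stolzCone β z] z) (𝓝 (l.rnDeriv ν z)) := by
  have := isLocallyFiniteMeasure_of_invDistPotential_ne_top hl0
  have hν1 : ∀ᵐ v ∂ν, 1 ≤ ‖v‖ := hν.mono fun v hv => hv.ge
  filter_upwards [l.rnDeriv_ne_top ν, ae_tendsto_invDistPotential_nhds_top hν,
    ae_tendsto_invDistPotential_densityDefect_div hν hl hl0] with z hz_top hν_top hdefect β hβ
  rw [← Real.enorm_toReal hz_top]
  refine tendsto_div_of_le_mul_add_of_mul_le_add enorm_ne_top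
    ((hν_top β).eventually_ne ENNReal.top_ne_zero) ?_ (fun x => ?_) (fun x => ?_) (hdefect β hβ)
  · filter_upwards [self_mem_nhdsWithin] with x hx
    exact invDistPotential_ne_top_of_norm_lt_one hν1 hx.1
  · rw [← invDistPotential_smul, ← invDistPotential_add]
    exact invDistPotential_mono (le_smul_add_densityDefect z) x
  · rw [← invDistPotential_smul, ← invDistPotential_add]
    exact invDistPotential_mono (smul_le_add_densityDefect z) x

end Fatou

section WeakLimits

variable {ι X : Type*} {F : Filter ι}

theorem tendsto_lintegral_of_continuous_of_le [MeasurableSpace X] [TopologicalSpace X]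
    [OpensMeasurableSpace X] {m : ι → FiniteMeasure X} {μ : FiniteMeasure X}
    (hm : Tendsto m F (𝓝 μ)) {f : X → ℝ≥0∞} (hf : Continuous f) {K : ℝ≥0} (hK : ∀ x, f x ≤ K) :
    Tendsto (fun i => ∫⁻ x, f x ∂(m i : Measure X)) F (𝓝 (∫⁻ x, f x ∂(μ : Measure X))) := by
  have hf_top (x : X) : f x ≠ ∞ := ne_top_of_le_ne_top ENNReal.coe_ne_top (hK x)
  let g : BoundedContinuousFunction X ℝ≥0 := .mkOfBound
    ⟨fun x => (f x).toNNReal, ENNReal.continuousOn_toNNReal.comp_continuous hf hf_top⟩ K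
    fun x y => by
      rw [NNReal.dist_eq]
      have hx : (f x).toNNReal ≤ K := ENNReal.toNNReal_mono ENNReal.coe_ne_top (hK x)
      have hy : (f y).toNNReal ≤ K := ENNReal.toNNReal_mono ENNReal.coe_ne_top (hK y)
      exact abs_sub_le_of_nonneg_of_le (by positivity) hx (by positivity) hy
  have hg (x : X) : (g x : ℝ≥0∞) = f x := ENNReal.coe_toNNReal (hf_top x)
  simpa only [hg] using FiniteMeasure.tendsto_iff_forall_lintegral_tendsto.1 hm g

theorem tendsto_truncatedPotential [PseudoMetricSpace X] [MeasurableSpace X]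
    [OpensMeasurableSpace X] {m : ι → FiniteMeasure X} {μ : FiniteMeasure X}
    (hm : Tendsto m F (𝓝 μ)) (d : ℕ) {δ : ℝ≥0∞} (hδ : δ ≠ 0) (z : X) :
    Tendsto (fun i => truncatedPotential d (m i) δ z) F (𝓝 (truncatedPotential d μ δ z)) := by
  refine tendsto_lintegral_of_continuous_of_le hm (by fun_prop) (K := (δ ^ d)⁻¹.toNNReal)
    fun y => ?_
  rw [ENNReal.coe_toNNReal (ENNReal.inv_ne_top.2 (pow_ne_zero d hδ))]
  gcongr
  exact le_max_left _ _

variable {E : Type*} [NormedAddCommGroup E] {r : ι → ℝ} {x : E}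

theorem ofReal_le_edist_of_norm_le {v : E} (hv : (1 + ‖x‖) / 2 ≤ ‖v‖) :
    ENNReal.ofReal ((1 - ‖x‖) / 2) ≤ edist x v := by
  rw [edist_dist, dist_eq_norm']
  exact ENNReal.ofReal_le_ofReal (by linarith [norm_sub_norm_le v x])

variable [MeasurableSpace E]

theorem exists_mapClusterPt_of_ae_norm_le_one [BorelSpace E] [ProperSpace E] [NeBot F]
    {m : ι → FiniteMeasure E} {C : ℝ≥0} (hC : ∀ i, (m i).mass ≤ C)
    (hball : ∀ i, ∀ᵐ v ∂(m i : Measure E), ‖v‖ ≤ 1) :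
    ∃ μ : FiniteMeasure E, MapClusterPt μ F m := by
  have hcompact := isCompact_setOfPred_finiteMeasure_le_of_isCompact C
    (isCompact_closedBall (0 : E) 1)
  obtain ⟨μ, -, hμ⟩ := hcompact.exists_mapClusterPt (f := F) (u := m) <| by
    refine tendsto_principal.2 (Eventually.of_forall fun i => ⟨hC i, ?_⟩)
    rw [FiniteMeasure.null_iff_toMeasure_null, measure_eq_zero_iff_ae_notMem]
    filter_upwards [hball i] with v hv
    simpa using hv
  exact ⟨μ, hμ⟩

theorem ae_one_le_norm_of_tendsto [OpensMeasurableSpace E] [NeBot F]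
    {m : ι → FiniteMeasure E} {μ : FiniteMeasure E} (hm : Tendsto m F (𝓝 μ))
    (hr : Tendsto r F (𝓝 1)) (hmr : ∀ i, ∀ᵐ v ∂(m i : Measure E), r i ≤ ‖v‖) :
    ∀ᵐ v ∂(μ : Measure E), 1 ≤ ‖v‖ := by
  have hgap : Tendsto (fun i => ENNReal.ofReal (1 - r i) * (m i).mass) F (𝓝 0) := by
    have hfactor : Tendsto (fun i => ENNReal.ofReal (1 - r i)) F (𝓝 0) := by
      simpa using ENNReal.tendsto_ofReal (hr.const_sub 1)
    simpa using ENNReal.Tendsto.mul hfactor (Or.inr ENNReal.coe_ne_top)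
      (ENNReal.tendsto_coe.2 hm.mass) (Or.inr ENNReal.zero_ne_top)
  have hle (i : ι) : ∫⁻ v, ENNReal.ofReal (1 - ‖v‖) ∂(m i : Measure E)
      ≤ ENNReal.ofReal (1 - r i) * (m i).mass := by
    rw [FiniteMeasure.ennreal_mass, ← lintegral_const]
    refine lintegral_mono_ae ((hmr i).mono fun v hv => ?_)
    gcongr
  have hlim := tendsto_lintegral_of_continuous_of_le hm
    (f := fun v => ENNReal.ofReal (1 - ‖v‖)) (K := 1)
    (ENNReal.continuous_ofReal.comp (by fun_prop)) (by simp)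
  have hzero : ∫⁻ v, ENNReal.ofReal (1 - ‖v‖) ∂(μ : Measure E) = 0 :=
    tendsto_nhds_unique hlim (tendsto_of_tendsto_of_tendsto_of_le_of_le tendsto_const_nhds hgap
      (fun _ => zero_le) hle)
  rw [lintegral_eq_zero_iff (by fun_prop)] at hzero
  filter_upwards [hzero] with v hv
  simpa using hv

theorem tendsto_invDistPotential_of_tendsto [OpensMeasurableSpace E] {m : ι → FiniteMeasure E}
    {μ : FiniteMeasure E} (hm : Tendsto m F (𝓝 μ)) (hr : Tendsto r F (𝓝 1))
    (hmr : ∀ i, ∀ᵐ v ∂(m i : Measure E), r i ≤ ‖v‖) (hμ : ∀ᵐ v ∂(μ : Measure E), 1 ≤ ‖v‖)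
    (d : ℕ) (hx : ‖x‖ < 1) :
    Tendsto (fun i => invDistPotential d (m i) x) F (𝓝 (invDistPotential d μ x)) := by
  have hδ : ENNReal.ofReal ((1 - ‖x‖) / 2) ≠ 0 := (ENNReal.ofReal_pos.2 (by linarith)).ne'
  have hlim := tendsto_truncatedPotential hm d hδ x
  rw [truncatedPotential_eq_invDistPotential
    (hμ.mono fun v hv => ofReal_le_edist_of_norm_le (by linarith))] at hlim
  refine hlim.congr' ?_
  filter_upwards [hr.eventually_const_le (show (1 + ‖x‖) / 2 < 1 by linarith)] with i hi
  exact truncatedPotential_eq_invDistPotential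
    ((hmr i).mono fun v hv => ofReal_le_edist_of_norm_le (hi.trans hv))

theorem exists_tendsto_invDistPotential [BorelSpace E] [ProperSpace E] [NeBot F]
    {m : ι → Measure E} {C : ℝ≥0} (hC : ∀ i, m i univ ≤ C) (hr : Tendsto r F (𝓝 1))
    (hmr : ∀ i, ∀ᵐ v ∂m i, r i ≤ ‖v‖) (hball : ∀ i, ∀ᵐ v ∂m i, ‖v‖ ≤ 1) :
    ∃ μ : Measure E, (∀ᵐ v ∂μ, 1 ≤ ‖v‖) ∧ ∃ U : Ultrafilter ι, ↑U ≤ F ∧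
      ∀ d x, ‖x‖ < 1 →
        Tendsto (fun i => invDistPotential d (m i) x) U (𝓝 (invDistPotential d μ x)) := by
  let M (i : ι) : FiniteMeasure E := ⟨m i, ⟨(hC i).trans_lt ENNReal.coe_lt_top⟩⟩
  have hM (i : ι) : (M i).mass ≤ C := by
    rw [← ENNReal.coe_le_coe, FiniteMeasure.ennreal_mass]
    exact hC i
  obtain ⟨μ, hμ⟩ := exists_mapClusterPt_of_ae_norm_le_one (F := F) hM hball
  obtain ⟨U, hU, hlim⟩ := mapClusterPt_iff_ultrafilter.1 hμ
  have hμ1 := ae_one_le_norm_of_tendsto hlim (hr.mono_left hU) hmr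
  exact ⟨μ, hμ1, U, hU, fun d x hx =>
    tendsto_invDistPotential_of_tendsto hlim (hr.mono_left hU) hmr hμ1 d hx⟩

end WeakLimits

theorem ofReal_inv_dist_pow {X : Type*} [PseudoMetricSpace X] {x v : X} (h : 0 < dist x v)
    (d : ℕ) : ENNReal.ofReal (dist x v ^ d)⁻¹ = (edist x v ^ d)⁻¹ := by
  rw [ENNReal.ofReal_inv_of_pos (by positivity), ENNReal.ofReal_pow h.le, edist_dist]

section Representation

variable {n : ℕ} {α r : ℝ} {u : EuclideanSpace ℝ (Fin n) → ℝ} {x v : EuclideanSpace ℝ (Fin n)}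

/-- The normalizing constant `C(n, α)` of the stable Poisson kernel. -/
noncomputable def stablePoissonConst (n : ℕ) (α : ℝ) : ℝ :=
  Real.Gamma (n / 2) * Real.pi ^ (-(n : ℝ) / 2 - 1) * Real.sin (Real.pi * α / 2)

/-- The part of `P_{0,r}(x, v) u(v)` that does not depend on `x`: the Poisson integral of `u` over
`B(0, r)` is `(r² - |x|²)^{α/2}` times the potential of the measure with this density. -/
noncomputable def poissonDensity (α : ℝ) (u : EuclideanSpace ℝ (Fin n) → ℝ) (r : ℝ)
    (v : EuclideanSpace ℝ (Fin n)) : ℝ :=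
  stablePoissonConst n α * ((‖v‖ ^ 2 - r ^ 2) ^ (α / 2))⁻¹ * u v

/-- The measure on `|v| > r` with density `poissonDensity α u r`. -/
noncomputable def exteriorMeasure (α : ℝ) (u : EuclideanSpace ℝ (Fin n) → ℝ) (r : ℝ) :
    Measure (EuclideanSpace ℝ (Fin n)) :=
  (volume.restrict (closedBall 0 r)ᶜ).withDensity fun v => ENNReal.ofReal (poissonDensity α u r v)

theorem stablePoissonConst_nonneg (n : ℕ) (hα : α ∈ Ioo (0 : ℝ) 2) :
    0 ≤ stablePoissonConst n α := by
  have hsin : 0 ≤ Real.sin (Real.pi * α / 2) :=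
    Real.sin_nonneg_of_nonneg_of_le_pi (by have := hα.1; positivity)
      (by nlinarith [hα.2, Real.pi_pos])
  unfold stablePoissonConst
  positivity

theorem sq_sub_sq_pos {a b : ℝ} (ha : 0 ≤ a) (hab : a < b) : 0 < b ^ 2 - a ^ 2 :=
  sub_pos.2 (pow_lt_pow_left₀ hab ha two_ne_zero)

theorem poissonDensity_nonneg (hα : α ∈ Ioo (0 : ℝ) 2) (hu : 0 ≤ u v) (hr : 0 ≤ r)
    (hv : r < ‖v‖) : 0 ≤ poissonDensity α u r v := by
  have hconst := stablePoissonConst_nonneg n hα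
  have hsq := sq_sub_sq_pos hr hv
  unfold poissonDensity
  positivity

theorem measurable_poissonDensity (hu : Measurable u) : Measurable (poissonDensity α u r) := by
  unfold poissonDensity
  fun_prop

theorem stablePoissonKernel_mul_eq (hx : ‖x‖ < r) (hv : r < ‖v‖) :
    stablePoissonKernel n α 0 r x v * u v
      = (r ^ 2 - ‖x‖ ^ 2) ^ (α / 2) * (poissonDensity α u r v * (dist x v ^ n)⁻¹) := by
  have hxr := sq_sub_sq_pos (norm_nonneg x) hx
  have hvr := sq_sub_sq_pos ((norm_nonneg x).trans hx.le) hv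
  unfold stablePoissonKernel poissonDensity stablePoissonConst
  rw [dist_zero_right, dist_zero_right, Real.div_rpow hxr.le hvr.le, Real.rpow_neg dist_nonneg,
    Real.rpow_natCast]
  ring

theorem poissonDensity_le_poissonDensity (hα : α ∈ Ioo (0 : ℝ) 2) (hu : 0 ≤ u v) {s : ℝ}
    (hs : 0 ≤ s) (hsr : s ≤ r) (hv : r < ‖v‖) :
    poissonDensity α u s v ≤ poissonDensity α u r v := by
  have hconst := stablePoissonConst_nonneg n hα
  have hα0 := hα.1
  have hsq := sq_sub_sq_pos (hs.trans hsr) hv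
  unfold poissonDensity
  gcongr

theorem continuousAt_poissonDensity (α : ℝ) (u : EuclideanSpace ℝ (Fin n) → ℝ) (hr : 0 ≤ r)
    (hv : r < ‖v‖) : ContinuousAt (fun s => poissonDensity α u s v) r := by
  have hsq := sq_sub_sq_pos hr hv
  have hpow : ContinuousAt (fun s => (‖v‖ ^ 2 - s ^ 2) ^ (α / 2)) r :=
    ContinuousAt.rpow_const (by fun_prop) (Or.inl hsq.ne')
  exact (continuousAt_const.mul (hpow.inv₀ (by positivity))).mul continuousAt_const

theorem ae_restrict_compl_closedBall_lt_norm {E : Type*} [NormedAddCommGroup E]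
    [MeasurableSpace E] [OpensMeasurableSpace E] (μ : Measure E) (r : ℝ) :
    ∀ᵐ v ∂μ.restrict (closedBall 0 r)ᶜ, r < ‖v‖ := by
  filter_upwards [ae_restrict_mem measurableSet_closedBall.compl] with v hv
  simpa using hv

theorem invDistPotential_exteriorMeasure (hu : Measurable u) (d : ℕ)
    (x : EuclideanSpace ℝ (Fin n)) :
    invDistPotential d (exteriorMeasure α u r) x = ∫⁻ v in (closedBall 0 r)ᶜ,
      ENNReal.ofReal (poissonDensity α u r v) * (edist x v ^ d)⁻¹ :=
  lintegral_withDensity_eq_lintegral_mul _ (measurable_poissonDensity hu).ennreal_ofReal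
    (by fun_prop)

theorem ae_exteriorMeasure_lt_norm (α : ℝ) (u : EuclideanSpace ℝ (Fin n) → ℝ) (r : ℝ) :
    ∀ᵐ v ∂exteriorMeasure α u r, r < ‖v‖ :=
  (withDensity_absolutelyContinuous _ _).ae_le (ae_restrict_compl_closedBall_lt_norm volume r)

theorem invDistPotential_exteriorMeasure_restrict_compl_closedBall (hu : Measurable u) {s : ℝ}
    (hsr : s ≤ r) (d : ℕ) (x : EuclideanSpace ℝ (Fin n)) :
    invDistPotential d ((exteriorMeasure α u s).restrict (closedBall 0 r)ᶜ) x
      = ∫⁻ v in (closedBall 0 r)ᶜ,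
        ENNReal.ofReal (poissonDensity α u s v) * (edist x v ^ d)⁻¹ := by
  rw [exteriorMeasure, restrict_withDensity measurableSet_closedBall.compl,
    Measure.restrict_restrict measurableSet_closedBall.compl,
    inter_eq_left.2 (compl_subset_compl.2 (closedBall_subset_closedBall hsr))]
  exact lintegral_withDensity_eq_lintegral_mul _ (measurable_poissonDensity hu).ennreal_ofReal
    (by fun_prop)

theorem tendsto_invDistPotential_exteriorMeasure_restrict (hα : α ∈ Ioo (0 : ℝ) 2)
    (hu : Measurable u) (hu0 : ∀ v, 0 ≤ u v) {s : ℕ → ℝ} (hs0 : ∀ k, 0 ≤ s k)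
    (hs_mono : Monotone s) (hs : Tendsto s atTop (𝓝 r)) (d : ℕ) (hx : ‖x‖ ≤ r) :
    Tendsto
      (fun k => invDistPotential d ((exteriorMeasure α u (s k)).restrict (closedBall 0 r)ᶜ) x)
      atTop (𝓝 (invDistPotential d (exteriorMeasure α u r) x)) := by
  have hsr (k : ℕ) : s k ≤ r := hs_mono.ge_of_tendsto hs k
  simp only [invDistPotential_exteriorMeasure_restrict_compl_closedBall hu (hsr _),
    invDistPotential_exteriorMeasure hu]
  refine lintegral_tendsto_of_tendsto_of_monotone (fun k => ?_) ?_ ?_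
  · exact ((measurable_poissonDensity hu).ennreal_ofReal.mul (by fun_prop)).aemeasurable
  · filter_upwards [ae_restrict_compl_closedBall_lt_norm volume r] with v hv j k hjk
    exact mul_le_mul_left (ENNReal.ofReal_le_ofReal (poissonDensity_le_poissonDensity hα
      (hu0 v) (hs0 j) (hs_mono hjk) ((hsr k).trans_lt hv))) _
  · filter_upwards [ae_restrict_compl_closedBall_lt_norm volume r] with v hv
    have hxv : x ≠ v := fun hxv => (hxv ▸ hv).not_ge hx
    have hdensity := continuousAt_poissonDensity α u ((hs0 0).trans (hsr 0)) hv
    exact ENNReal.Tendsto.mul_const (ENNReal.tendsto_ofReal (hdensity.tendsto.comp hs))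
      (Or.inr (ENNReal.inv_ne_top.2 (pow_ne_zero d (edist_pos.2 hxv).ne')))

theorem IsAlphaHarmonic.ofReal_eq_mul_invDistPotential_exteriorMeasure
    {D : Set (EuclideanSpace ℝ (Fin n))} (hu : IsAlphaHarmonic n α D u) (hα : α ∈ Ioo (0 : ℝ) 2)
    (hr : closedBall 0 r ⊆ D) (hx : ‖x‖ < r) :
    ENNReal.ofReal (u x) = ENNReal.ofReal ((r ^ 2 - ‖x‖ ^ 2) ^ (α / 2)) *
      invDistPotential n (exteriorMeasure α u r) x := by
  obtain ⟨hu_meas, hu0, -, hpoisson⟩ := hu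
  have hr0 : 0 < r := (norm_nonneg x).trans_lt hx
  obtain ⟨hint, hux⟩ := hpoisson 0 r hr0 hr x (by simpa using hx)
  have hset : {v : EuclideanSpace ℝ (Fin n) | r < dist v 0} = (closedBall 0 r)ᶜ := by
    ext v
    simp
  rw [hset] at hint hux
  have hxr := sq_sub_sq_pos (norm_nonneg x) hx
  have hkernel (v) (hv : r < ‖v‖) : ENNReal.ofReal (stablePoissonKernel n α 0 r x v * u v)
      = ENNReal.ofReal ((r ^ 2 - ‖x‖ ^ 2) ^ (α / 2)) *
        (ENNReal.ofReal (poissonDensity α u r v) * (edist x v ^ n)⁻¹) := by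
    have hxv : 0 < dist x v := dist_pos.2 fun hxv => (hxv ▸ hx).not_gt hv
    rw [stablePoissonKernel_mul_eq hx hv, ENNReal.ofReal_mul (by positivity),
      ENNReal.ofReal_mul (poissonDensity_nonneg hα (hu0 v) hr0.le hv), ofReal_inv_dist_pow hxv]
  rw [← hux, ofReal_integral_eq_lintegral_ofReal hint, invDistPotential_exteriorMeasure hu_meas,
    ← lintegral_const_mul' _ _ ENNReal.ofReal_ne_top]
  · exact lintegral_congr_ae ((ae_restrict_compl_closedBall_lt_norm volume r).mono hkernel)
  · filter_upwards [ae_restrict_compl_closedBall_lt_norm volume r] with v hv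
    rw [stablePoissonKernel_mul_eq hx hv]
    have hdensity := poissonDensity_nonneg hα (hu0 v) hr0.le hv
    exact mul_nonneg (by positivity) (by positivity)

theorem IsAlphaHarmonic.invDistPotential_exteriorMeasure_eq
    {D : Set (EuclideanSpace ℝ (Fin n))} (hu : IsAlphaHarmonic n α D u) (hα : α ∈ Ioo (0 : ℝ) 2)
    (hr : closedBall 0 r ⊆ D) (hx : ‖x‖ < r) :
    invDistPotential n (exteriorMeasure α u r) x
      = ENNReal.ofReal (u x / (r ^ 2 - ‖x‖ ^ 2) ^ (α / 2)) := by
  have hxr : 0 < (r ^ 2 - ‖x‖ ^ 2) ^ (α / 2) :=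
    Real.rpow_pos_of_pos (sq_sub_sq_pos (norm_nonneg x) hx) _
  rw [ENNReal.ofReal_div_of_pos hxr,
    ENNReal.eq_div_iff (ENNReal.ofReal_pos.2 hxr).ne' ENNReal.ofReal_ne_top]
  exact (hu.ofReal_eq_mul_invDistPotential_exteriorMeasure hα hr hx).symm

theorem IsAlphaHarmonic.exteriorMeasure_closedBall_le
    (hu : IsAlphaHarmonic n α (ball 0 1) u) (hα : α ∈ Ioo (0 : ℝ) 2) {s : ℝ} (hs : 0 < s)
    (hsr : s ≤ r) (hr : r < 1) :
    exteriorMeasure α u r (closedBall 0 1) ≤ ENNReal.ofReal (u 0 / (s ^ 2) ^ (α / 2)) := by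
  have hα0 := hα.1
  have hu0 := hu.2.1 0
  calc exteriorMeasure α u r (closedBall 0 1)
      ≤ invDistPotential n (exteriorMeasure α u r) 0 := by
        simpa using measure_closedBall_le_mul_invDistPotential (d := n)
          (exteriorMeasure α u r) 0 one_pos
    _ = ENNReal.ofReal (u 0 / (r ^ 2) ^ (α / 2)) := by
        rw [hu.invDistPotential_exteriorMeasure_eq hα (closedBall_subset_ball hr)
          (by simpa using hs.trans_le hsr)]
        simp
    _ ≤ ENNReal.ofReal (u 0 / (s ^ 2) ^ (α / 2)) := by gcongr

theorem IsAlphaHarmonic.tendsto_invDistPotential_exteriorMeasure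
    (hu : IsAlphaHarmonic n α (ball 0 1) u) (hα : α ∈ Ioo (0 : ℝ) 2) {ι : Type*} {F : Filter ι}
    {s : ι → ℝ} (hs1 : ∀ i, s i < 1) (hs : Tendsto s F (𝓝 1)) (hx : ‖x‖ < 1) :
    Tendsto (fun i => invDistPotential n (exteriorMeasure α u (s i)) x) F
      (𝓝 (ENNReal.ofReal (u x / (1 - ‖x‖ ^ 2) ^ (α / 2)))) := by
  have hsq : 0 < 1 - ‖x‖ ^ 2 := by simpa using sq_sub_sq_pos (norm_nonneg x) hx
  have hbase : Tendsto (fun i => s i ^ 2 - ‖x‖ ^ 2) F (𝓝 (1 - ‖x‖ ^ 2)) := by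
    simpa using (hs.pow 2).sub_const (‖x‖ ^ 2)
  have hfactor := hbase.rpow_const (p := α / 2) (Or.inl hsq.ne')
  have hlim := ENNReal.tendsto_ofReal ((tendsto_const_nhds (x := u x)).div hfactor (by positivity))
  refine hlim.congr' ?_
  filter_upwards [hs.eventually_const_lt hx] with i hi
  exact (hu.invDistPotential_exteriorMeasure_eq hα (closedBall_subset_ball (hs1 i)) hi).symm

theorem IsAlphaHarmonic.exists_invDistPotential_eq
    (hu : IsAlphaHarmonic n α (ball 0 1) u) (hα : α ∈ Ioo (0 : ℝ) 2) :
    ∃ l : Measure (EuclideanSpace ℝ (Fin n)), (∀ᵐ v ∂l, 1 ≤ ‖v‖) ∧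
      ∀ x, ‖x‖ < 1 →
        invDistPotential n l x = ENNReal.ofReal (u x / (1 - ‖x‖ ^ 2) ^ (α / 2)) := by
  obtain ⟨s, hs_mono, hs_mem, hs⟩ := exists_seq_strictMono_tendsto' (zero_lt_one (α := ℝ))
  let m (k : ℕ) := (exteriorMeasure α u (s k)).restrict (closedBall 0 1)
  have hm_mass (k : ℕ) : m k univ ≤ ENNReal.ofReal (u 0 / (s 0 ^ 2) ^ (α / 2)) := by
    rw [Measure.restrict_apply_univ]
    exact hu.exteriorMeasure_closedBall_le hα (hs_mem 0).1 (hs_mono.monotone k.zero_le)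
      (hs_mem k).2
  have hm_lower (k : ℕ) : ∀ᵐ v ∂m k, s k ≤ ‖v‖ :=
    ae_restrict_of_ae ((ae_exteriorMeasure_lt_norm α u (s k)).mono fun _ hv => hv.le)
  have hm_upper (k : ℕ) : ∀ᵐ v ∂m k, ‖v‖ ≤ 1 := by
    filter_upwards [ae_restrict_mem measurableSet_closedBall] with v hv
    simpa using hv
  obtain ⟨μ, hμ, U, hU, hμ_lim⟩ := exists_tendsto_invDistPotential hm_mass hs hm_lower hm_upper
  refine ⟨μ + exteriorMeasure α u 1, ?_, fun x hx => ?_⟩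
  · exact ae_add_measure_iff.2
      ⟨hμ, (ae_exteriorMeasure_lt_norm α u 1).mono fun _ hv => hv.le⟩
  have hsplit (k : ℕ) : invDistPotential n (exteriorMeasure α u (s k)) x
      = invDistPotential n (m k) x
        + invDistPotential n ((exteriorMeasure α u (s k)).restrict (closedBall 0 1)ᶜ) x := by
    rw [← invDistPotential_add, Measure.restrict_add_restrict_compl measurableSet_closedBall]
  have houter := tendsto_invDistPotential_exteriorMeasure_restrict hα hu.1 hu.2.1
    (fun k => (hs_mem k).1.le) hs_mono.monotone hs n hx.le
  have hsum := (hμ_lim n x hx).add (houter.mono_left hU)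
  simp only [← hsplit] at hsum
  rw [invDistPotential_add]
  exact tendsto_nhds_unique hsum
    (hu.tendsto_invDistPotential_exteriorMeasure hα (fun k => (hs_mem k).2) (hs.mono_left hU) hx)

end Representation

section Conclusion

variable {n : ℕ} {α : ℝ} {ν : Measure (EuclideanSpace ℝ (Fin n))}
  {u v : EuclideanSpace ℝ (Fin n) → ℝ}

theorem stolzSet_subset_stolzCone (n : ℕ) (β : ℝ) (z : EuclideanSpace ℝ (Fin n)) :
    stolzSet n β z ⊆ stolzCone β z :=
  fun _ hx => ⟨mem_ball_zero_iff.1 hx.1, hx.2.2⟩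

theorem integral_martinKernel_eq (hν : ∀ᵐ w ∂ν, 1 ≤ ‖w‖) {x : EuclideanSpace ℝ (Fin n)}
    (hx : ‖x‖ < 1) :
    ∫ w, martinKernel n α x w ∂ν
      = (1 - ‖x‖ ^ 2) ^ (α / 2) * (invDistPotential n ν x).toReal := by
  unfold martinKernel
  rw [integral_const_mul, integral_eq_lintegral_of_nonneg_ae
    (Eventually.of_forall fun w => by positivity)
    (Measurable.aestronglyMeasurable (by fun_prop))]
  congr 2
  refine lintegral_congr_ae ?_
  filter_upwards [hν] with w hw
  rw [Real.rpow_neg dist_nonneg, Real.rpow_natCast,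
    ofReal_inv_dist_pow (dist_pos_of_norm_lt_one hx hw)]

theorem IsAlphaHarmonic.ae_tendsto_div_integral_martinKernel [IsFiniteMeasure ν]
    (hu : IsAlphaHarmonic n α (ball 0 1) u) (hα : α ∈ Ioo (0 : ℝ) 2)
    (hν : ∀ᵐ z ∂ν, ‖z‖ = 1) :
    ∀ᵐ z ∂ν, ∀ β > 0, ∃ L : ℝ, Tendsto (fun x => u x / ∫ w, martinKernel n α x w ∂ν)
      (𝓝[stolzCone β z] z) (𝓝 L) := by
  obtain ⟨l, hl, hlu⟩ := hu.exists_invDistPotential_eq hα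
  have hν1 : ∀ᵐ w ∂ν, 1 ≤ ‖w‖ := hν.mono fun w hw => hw.ge
  have hl0 : invDistPotential n l 0 ≠ ∞ := by
    rw [hlu 0 (by simp)]
    exact ENNReal.ofReal_ne_top
  have hquot {x : EuclideanSpace ℝ (Fin n)} (hx : ‖x‖ < 1) :
      (invDistPotential n l x / invDistPotential n ν x).toReal
        = u x / ∫ w, martinKernel n α x w ∂ν := by
    have hsq : 0 < 1 - ‖x‖ ^ 2 := by simpa using sq_sub_sq_pos (norm_nonneg x) hx
    have hux := hu.2.1 x
    rw [integral_martinKernel_eq hν1 hx, ENNReal.toReal_div, hlu x hx,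
      ENNReal.toReal_ofReal (by positivity), div_div]
  have hfatou := ae_tendsto_invDistPotential_div_rnDeriv hν hl
    (by rwa [finrank_euclideanSpace_fin])
  simp only [finrank_euclideanSpace_fin] at hfatou
  have := isLocallyFiniteMeasure_of_invDistPotential_ne_top hl0
  filter_upwards [hfatou, l.rnDeriv_ne_top ν] with z hz hz_top β hβ
  refine ⟨(l.rnDeriv ν z).toReal, ((ENNReal.tendsto_toReal hz_top).comp (hz β hβ)).congr' ?_⟩
  filter_upwards [self_mem_nhdsWithin] with x hx
  exact hquot hx.1

theorem stmt13_general (hα : α ∈ Ioo (0 : ℝ) 2) [IsFiniteMeasure ν]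
    (hνS : ν (sphere (0 : EuclideanSpace ℝ (Fin n)) 1)ᶜ = 0)
    (hvlim : ∀ᵐ z ∂ν, ∀ β : ℝ, 1 < β → ∃ L : ℝ, L ≠ 0 ∧
      Tendsto (fun x => v x / ∫ w, martinKernel n α x w ∂ν) (𝓝[stolzSet n β z] z) (𝓝 L))
    (hu : IsAlphaHarmonic n α (ball 0 1) u) :
    ∀ᵐ z ∂ν, ∀ β : ℝ, 1 < β → ∃ L : ℝ,
      Tendsto (fun x => u x / v x) (𝓝[stolzSet n β z] z) (𝓝 L) := by
  have hν : ∀ᵐ z ∂ν, ‖z‖ = 1 := by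
    filter_upwards [measure_eq_zero_iff_ae_notMem.1 hνS] with z hz
    simpa using hz
  filter_upwards [hvlim, hu.ae_tendsto_div_integral_martinKernel hα hν] with z hv hu β hβ
  obtain ⟨Lv, hLv, hv_lim⟩ := hv β hβ
  obtain ⟨Lu, hu_lim⟩ := hu β (zero_lt_one.trans hβ)
  have hu_lim := hu_lim.mono_left (nhdsWithin_mono z (stolzSet_subset_stolzCone n β z))
  refine ⟨Lu / Lv, (hu_lim.div hv_lim hLv).congr' ?_⟩
  filter_upwards [hv_lim.eventually_ne hLv] with x hx
  -- Since `t / 0 = 0`, the nonzero value `v x / h x` already forces `h x ≠ 0`.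
  exact div_div_div_cancel_right₀ (div_ne_zero_iff.1 hx).2 _ _

end Conclusion

/-- let `ν` be a nonzero finite Borel measure on the unit sphere,
`h(x) = ∫_S M(x,w) ν(dw)`. If `v` is positive α-harmonic in `B` and for ν-a.e.
`z ∈ S` and every `β > 1` the limit of `v(x)/h(x)` along `A^β_z` exists and is
nonzero, then for every positive α-harmonic `u` in `B`, for ν-a.e. `z ∈ S` and every
`β > 1`, the limit of `u(x)/v(x)` along `A^β_z` exists. -/
theorem stmt13 (n : ℕ) (hn : 2 ≤ n) (α : ℝ) (hα : α ∈ Set.Ioo (0 : ℝ) 2)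
    (ν : Measure (EuclideanSpace ℝ (Fin n))) [IsFiniteMeasure ν] (hν : ν ≠ 0)
    (hνS : ν (sphere (0 : EuclideanSpace ℝ (Fin n)) 1)ᶜ = 0)
    (v : EuclideanSpace ℝ (Fin n) → ℝ)
    (hv : IsAlphaHarmonic n α (ball (0 : EuclideanSpace ℝ (Fin n)) 1) v)
    (hvpos : ∀ x ∈ ball (0 : EuclideanSpace ℝ (Fin n)) 1, 0 < v x)
    (hvlim : ∀ᵐ z ∂ν, ∀ β : ℝ, 1 < β → ∃ L : ℝ, L ≠ 0 ∧
      Tendsto (fun x => v x / ∫ w, martinKernel n α x w ∂ν)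
        (nhdsWithin z (stolzSet n β z)) (nhds L)) :
    ∀ u : EuclideanSpace ℝ (Fin n) → ℝ,
      IsAlphaHarmonic n α (ball (0 : EuclideanSpace ℝ (Fin n)) 1) u →
      (∀ x ∈ ball (0 : EuclideanSpace ℝ (Fin n)) 1, 0 < u x) →
      ∀ᵐ z ∂ν, ∀ β : ℝ, 1 < β → ∃ L : ℝ,
        Tendsto (fun x => u x / v x)
          (nhdsWithin z (stolzSet n β z)) (nhds L) := by
  intro u hu _
  exact stmt13_general hα hνS hvlim hu
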